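/- (Proposition 3: MI via message passing.) For every vertex i ∈ V and every t ∈ ℝ, the indicator 1[t ∈ D_i] times the belief b_i(t) equals the partial Lebesgue integral of the indicator of Δ over all coordinates except i, with the i-th coordinate fixed to t; that is, 1[t ∈ D_i]·b_i(t) = ∫_{ℝ^{V∖{i}}} 1[x ∈ Δ] dx_{V∖{i}} where x_i = t. Consequently, the Lebesgue volume of Δ (the model integration MI(Δ)) equals ∫_ℝ 1[t ∈ D_i]·b_i(t) dt for every vertex i. -/

import Mathlib

open MeasureTheory
open scoped ENNReal

noncomputable section

/-- The model region `Δ ⊆ ℝ^V` : the set of points `x` with `x_i ∈ D_i` for every vertex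
`i` and `(x_i, x_j) ∈ D_{ij}` for every edge `{i,j}`. -/
def mpModel {V : Type*} (G : SimpleGraph V) (D : V → Set ℝ) (Dij : V → V → Set (ℝ × ℝ)) :
    Set (V → ℝ) :=
  {x | (∀ i, x i ∈ D i) ∧ ∀ i j, G.Adj i j → (x i, x j) ∈ Dij i j}

/-- In an acyclic graph, a vertex outside a connected vertex set has at most one neighbor in it. -/
theorem SimpleGraph.IsAcyclic.eq_of_adj_of_induce_connected {V : Type*} {G : SimpleGraph V}
    (hG : G.IsAcyclic) {s : Set V} (hs : (G.induce s).Connected) {v p q : V} (hv : v ∉ s)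
    (hp : p ∈ s) (hq : q ∈ s) (hpv : G.Adj v p) (hqv : G.Adj v q) : p = q := by
  classical
  by_contra hne
  obtain ⟨w⟩ := hs.preconnected ⟨p, hp⟩ ⟨q, hq⟩
  let w' : G.Walk p q := w.map (SimpleGraph.Embedding.induce s).toHom
  have hw' : v ∉ w'.support := by
    intro h
    obtain ⟨u, -, rfl⟩ := List.mem_map.1 (SimpleGraph.Walk.support_map _ w ▸ h)
    exact hv u.2
  let viaV : G.Walk p q := .cons hpv.symm (.cons hqv .nil)
  have hviaV : viaV.IsPath := by
    simp [viaV, SimpleGraph.Walk.cons_isPath_iff, hpv.ne', hqv.ne, hne]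
  have h := (hG.subsingleton_path p q).elim ⟨viaV, hviaV⟩ w'.toPath
  apply hw'
  apply w'.support_toPath_subset_support
  rw [← h]
  simp [viaV]

/-- Adding a neighbor to a connected vertex set keeps it connected. -/
theorem SimpleGraph.induce_insert_connected {V : Type*} {G : SimpleGraph V} {s : Set V}
    (hs : (G.induce s).Connected) {v p : V} (hp : p ∈ s) (hvp : G.Adj v p) :
    (G.induce (insert v s)).Connected := by
  have h := SimpleGraph.induce_union_connected
    (SimpleGraph.induce_pair_connected_of_adj hvp).preconnected hs.preconnected
    ⟨p, by simp, hp⟩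
  rwa [Set.insert_union, Set.singleton_union, Set.insert_eq_of_mem hp] at h

/-- A proper nonempty vertex set of a connected graph has a neighbor outside of it. -/
theorem SimpleGraph.Connected.exists_adj_notMem {V : Type*} {G : SimpleGraph V}
    (hG : G.Connected) {s : Set V} {a b : V} (ha : a ∈ s) (hb : b ∉ s) :
    ∃ p ∈ s, ∃ v ∉ s, G.Adj v p := by
  obtain ⟨w⟩ := hG.preconnected a b
  obtain ⟨d, -, h1, h2⟩ := w.exists_boundary_dart s ha hb
  exact ⟨d.fst, h1, d.snd, h2, d.adj.symm⟩

/-- The points satisfying all constraints among the vertices in `S`. -/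
def mpRegion {V : Type*} (G : SimpleGraph V) (D : V → Set ℝ) (Dij : V → V → Set (ℝ × ℝ))
    (S : Finset V) : Set (V → ℝ) :=
  {x | (∀ i ∈ S, x i ∈ D i) ∧ ∀ i ∈ S, ∀ j ∈ S, G.Adj i j → (x i, x j) ∈ Dij i j}

/-- The indicator of the constraints within `S` times all messages entering `S`. -/
def mpWeight {V : Type*} [Fintype V] [DecidableEq V] (G : SimpleGraph V) [DecidableRel G.Adj]
    (D : V → Set ℝ) (Dij : V → V → Set (ℝ × ℝ)) (m : V → V → ℝ → ℝ≥0∞) (S : Finset V)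
    (x : V → ℝ) : ℝ≥0∞ :=
  (mpRegion G D Dij S).indicator 1 x * ∏ v ∈ S, ∏ c ∈ G.neighborFinset v \ S, m c v (x v)

theorem mpRegion_univ {V : Type*} [Fintype V] (G : SimpleGraph V) (D : V → Set ℝ)
    (Dij : V → V → Set (ℝ × ℝ)) : mpRegion G D Dij Finset.univ = mpModel G D Dij := by
  simp [mpRegion, mpModel]

theorem mpWeight_univ {V : Type*} [Fintype V] [DecidableEq V] (G : SimpleGraph V)
    [DecidableRel G.Adj] (D : V → Set ℝ) (Dij : V → V → Set (ℝ × ℝ)) (m : V → V → ℝ → ℝ≥0∞) :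
    mpWeight G D Dij m Finset.univ = (mpModel G D Dij).indicator 1 := by
  ext x
  have h (v : V) : G.neighborFinset v \ Finset.univ = ∅ :=
    Finset.sdiff_eq_empty_iff_subset.2 (Finset.subset_univ _)
  simp [mpWeight, mpRegion_univ, h]

theorem mpWeight_singleton {V : Type*} [Fintype V] [DecidableEq V] (G : SimpleGraph V)
    [DecidableRel G.Adj] (D : V → Set ℝ) (Dij : V → V → Set (ℝ × ℝ)) (m : V → V → ℝ → ℝ≥0∞)
    (i : V) (x : V → ℝ) :
    mpWeight G D Dij m {i} x =
      (D i).indicator 1 (x i) * ∏ c ∈ G.neighborFinset i, m c i (x i) := by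
  classical
  have h : G.neighborFinset i \ {i} = G.neighborFinset i := by simp
  simp [mpWeight, mpRegion, h, Set.indicator_apply]

theorem measurableSet_mpModel {V : Type*} [Finite V] (G : SimpleGraph V) {D : V → Set ℝ}
    (hD : ∀ i, MeasurableSet (D i)) {Dij : V → V → Set (ℝ × ℝ)}
    (hDij : ∀ i j, MeasurableSet (Dij i j)) : MeasurableSet (mpModel G D Dij) := by
  have h : mpModel G D Dij = (⋂ i, (fun x : V → ℝ => x i) ⁻¹' D i) ∩
      ⋂ i, ⋂ j, ⋂ _ : G.Adj i j, (fun x : V → ℝ => (x i, x j)) ⁻¹' Dij i j := by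
    ext x
    simp [mpModel]
  rw [h]
  refine .inter (.iInter fun i => measurable_pi_apply i (hD i))
    (.iInter fun i => .iInter fun j => .iInter fun _ => ?_)
  exact ((measurable_pi_apply i).prodMk (measurable_pi_apply j)) (hDij i j)

/-- A message leaving the complement of a connected vertex set is measurable. -/
theorem measurable_message_of_connected {V : Type*} [Fintype V] [DecidableEq V]
    {G : SimpleGraph V} [DecidableRel G.Adj] (hG : G.IsAcyclic)
    {D : V → Set ℝ} (hD : ∀ i, MeasurableSet (D i))
    {Dij : V → V → Set (ℝ × ℝ)} (hDij : ∀ i j, MeasurableSet (Dij i j))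
    {m : V → V → ℝ → ℝ≥0∞}
    (hm : ∀ i j, G.Adj i j → ∀ t : ℝ,
      m i j t = ∫⁻ x : ℝ,
        (Dij i j).indicator (1 : ℝ × ℝ → ℝ≥0∞) (x, t) *
          (D i).indicator (1 : ℝ → ℝ≥0∞) x *
          ∏ c ∈ (G.neighborFinset i).erase j, m c i x)
    (S : Finset V) (hS : (G.induce (S : Set V)).Connected) {i j : V} (hi : i ∉ S) (hj : j ∈ S)
    (hij : G.Adj i j) : Measurable (m i j) := by
  induction hn : Sᶜ.card using Nat.strong_induction_on generalizing S i j with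
  | _ n ih =>
    subst hn
    have hchild : ∀ c ∈ (G.neighborFinset i).erase j, Measurable (m c i) := by
      intro c hc
      rw [Finset.mem_erase, SimpleGraph.mem_neighborFinset] at hc
      have hcS : c ∉ S := fun h => hc.1
        (hG.eq_of_adj_of_induce_connected hS (by simpa using hi) h hj hc.2 hij)
      refine ih _ ?_ (insert i S) ?_ ?_ (Finset.mem_insert_self i S) hc.2.symm rfl
      · rw [Finset.compl_insert]
        exact Finset.card_erase_lt_of_mem (by simpa using hi)
      · rw [Finset.coe_insert]
        exact SimpleGraph.induce_insert_connected hS hj hij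
      · simp [hcS, hc.2.ne']
    rw [funext (hm i j hij)]
    refine Measurable.lintegral_prod_right' (f := fun z : ℝ × ℝ =>
      (Dij i j).indicator (1 : ℝ × ℝ → ℝ≥0∞) (z.2, z.1) *
        (D i).indicator (1 : ℝ → ℝ≥0∞) z.2 *
        ∏ c ∈ (G.neighborFinset i).erase j, m c i z.2) ?_
    refine ((((measurable_one.indicator (hDij i j)).comp measurable_swap).mul
      ((measurable_one.indicator (hD i)).comp measurable_snd))).mul ?_
    exact Finset.measurable_fun_prod _ fun c hc => (hchild c hc).comp measurable_snd

/-- Messages on an acyclic graph are measurable. -/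
theorem measurable_message {V : Type*} [Fintype V] [DecidableEq V]
    {G : SimpleGraph V} [DecidableRel G.Adj] (hG : G.IsAcyclic)
    {D : V → Set ℝ} (hD : ∀ i, MeasurableSet (D i))
    {Dij : V → V → Set (ℝ × ℝ)} (hDij : ∀ i j, MeasurableSet (Dij i j))
    {m : V → V → ℝ → ℝ≥0∞}
    (hm : ∀ i j, G.Adj i j → ∀ t : ℝ,
      m i j t = ∫⁻ x : ℝ,
        (Dij i j).indicator (1 : ℝ × ℝ → ℝ≥0∞) (x, t) *
          (D i).indicator (1 : ℝ → ℝ≥0∞) x *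
          ∏ c ∈ (G.neighborFinset i).erase j, m c i x)
    {i j : V} (hij : G.Adj i j) : Measurable (m i j) := by
  refine measurable_message_of_connected hG hD hDij hm {j} ?_ (by simpa using hij.ne)
    (Finset.mem_singleton_self j) hij
  rw [Finset.coe_singleton, SimpleGraph.induce_singleton_eq_top]
  exact SimpleGraph.connected_top

/-- Attaching a vertex `v` to `S` along its only edge into `S` adds the constraint at `v` and the
constraint on that edge. -/
theorem update_mem_mpRegion_insert_iff {V : Type*} [DecidableEq V] {G : SimpleGraph V}
    {D : V → Set ℝ} {Dij : V → V → Set (ℝ × ℝ)}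
    (hsym : ∀ i j, ∀ p : ℝ × ℝ, p ∈ Dij i j ↔ p.swap ∈ Dij j i)
    {S : Finset V} {v p : V} (hv : v ∉ S) (hp : p ∈ S) (hvp : G.Adj v p)
    (huniq : ∀ q ∈ S, G.Adj v q → q = p) (x : V → ℝ) (y : ℝ) :
    Function.update x v y ∈ mpRegion G D Dij (insert v S) ↔
      x ∈ mpRegion G D Dij S ∧ y ∈ D v ∧ (y, x p) ∈ Dij v p := by
  have hne : ∀ w ∈ S, w ≠ v := fun w hw => ne_of_mem_of_not_mem hw hv
  constructor
  · rintro ⟨h1, h2⟩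
    refine ⟨⟨fun i hi => ?_, fun i hi j hj hij => ?_⟩, ?_, ?_⟩
    · simpa [hne i hi] using h1 i (Finset.mem_insert_of_mem hi)
    · simpa [hne i hi, hne j hj] using
        h2 i (Finset.mem_insert_of_mem hi) j (Finset.mem_insert_of_mem hj) hij
    · simpa using h1 v (Finset.mem_insert_self v S)
    · simpa [hne p hp] using
        h2 v (Finset.mem_insert_self v S) p (Finset.mem_insert_of_mem hp) hvp
  · rintro ⟨⟨h1, h2⟩, h3, h4⟩
    refine ⟨fun i hi => ?_, fun i hi j hj hij => ?_⟩
    · rcases Finset.mem_insert.1 hi with rfl | hi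
      · simpa using h3
      · simpa [hne i hi] using h1 i hi
    · obtain rfl | hiS := Finset.mem_insert.1 hi <;> obtain rfl | hjS := Finset.mem_insert.1 hj
      · exact absurd hij (G.irrefl)
      · obtain rfl := huniq j hjS hij
        simpa [hne j hjS] using h4
      · obtain rfl := huniq i hiS hij.symm
        rw [hsym]
        simpa [hne i hiS] using h4
      · simpa [hne i hiS, hne j hjS] using h2 i hiS j hjS hij

/-- The messages entering `S` are the message along the only edge from `v` into `S` and those
from outside `insert v S`. -/
theorem prod_messages_insert {V : Type*} [Fintype V] [DecidableEq V] {G : SimpleGraph V}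
    [DecidableRel G.Adj] (m : V → V → ℝ → ℝ≥0∞)
    {S : Finset V} {v p : V} (hv : v ∉ S) (hp : p ∈ S) (hvp : G.Adj v p)
    (huniq : ∀ q ∈ S, G.Adj v q → q = p) (x : V → ℝ) :
    ∏ w ∈ S, ∏ c ∈ G.neighborFinset w \ S, m c w (x w) =
      m v p (x p) * ∏ w ∈ S, ∏ c ∈ G.neighborFinset w \ insert v S, m c w (x w) := by
  rw [← Finset.mul_prod_erase S _ hp, ← Finset.mul_prod_erase S _ hp, ← mul_assoc]
  congr 1
  · rw [Finset.sdiff_insert, Finset.mul_prod_erase _ (fun c => m c p (x p))]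
    simp [hv, hvp.symm]
  · refine Finset.prod_congr rfl fun w hw => ?_
    rw [Finset.mem_erase] at hw
    rw [Finset.sdiff_insert, Finset.erase_eq_of_notMem]
    intro h
    simp only [Finset.mem_sdiff, SimpleGraph.mem_neighborFinset] at h
    exact hw.1 (huniq w hw.2 h.1.symm)

/-- Integrating out the vertex `v` attached to `S` by a single edge. -/
theorem lintegral_mpWeight_insert {V : Type*} [Fintype V] [DecidableEq V]
    {G : SimpleGraph V} [DecidableRel G.Adj] (hG : G.IsAcyclic)
    {D : V → Set ℝ} (hD : ∀ i, MeasurableSet (D i))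
    {Dij : V → V → Set (ℝ × ℝ)} (hDij : ∀ i j, MeasurableSet (Dij i j))
    (hsym : ∀ i j, ∀ p : ℝ × ℝ, p ∈ Dij i j ↔ p.swap ∈ Dij j i)
    {m : V → V → ℝ → ℝ≥0∞}
    (hm : ∀ i j, G.Adj i j → ∀ t : ℝ,
      m i j t = ∫⁻ x : ℝ,
        (Dij i j).indicator (1 : ℝ × ℝ → ℝ≥0∞) (x, t) *
          (D i).indicator (1 : ℝ → ℝ≥0∞) x *
          ∏ c ∈ (G.neighborFinset i).erase j, m c i x)
    {S : Finset V} {v p : V} (hv : v ∉ S) (hp : p ∈ S) (hvp : G.Adj v p)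
    (huniq : ∀ q ∈ S, G.Adj v q → q = p) (x : V → ℝ) :
    ∫⁻ y, mpWeight G D Dij m (insert v S) (Function.update x v y) = mpWeight G D Dij m S x := by
  have hnb : G.neighborFinset v \ insert v S = (G.neighborFinset v).erase p := by
    ext c
    simp only [Finset.mem_sdiff, SimpleGraph.mem_neighborFinset, Finset.mem_insert,
      Finset.mem_erase, not_or]
    constructor
    · rintro ⟨hc, -, hcS⟩
      exact ⟨fun h => hcS (h ▸ hp), hc⟩
    · rintro ⟨hcp, hc⟩
      exact ⟨hc, hc.ne', fun hcS => hcp (huniq c hcS hc)⟩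
  have hrest : ∀ y, ∏ w ∈ S, ∏ c ∈ G.neighborFinset w \ insert v S,
      m c w (Function.update x v y w) =
        ∏ w ∈ S, ∏ c ∈ G.neighborFinset w \ insert v S, m c w (x w) := fun y =>
    Finset.prod_congr rfl fun w hw => by
      rw [Function.update_of_ne (ne_of_mem_of_not_mem hw hv)]
  have hind : ∀ y, (mpRegion G D Dij (insert v S)).indicator (1 : (V → ℝ) → ℝ≥0∞)
      (Function.update x v y) = (mpRegion G D Dij S).indicator 1 x *
        ((Dij v p).indicator 1 (y, x p) * (D v).indicator 1 y) := by
    classical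
    intro y
    simp only [Set.indicator_apply, update_mem_mpRegion_insert_iff hsym hv hp hvp huniq, Pi.one_apply]
    split_ifs <;> simp_all
  have hmeas : Measurable fun y : ℝ => (Dij v p).indicator (1 : ℝ × ℝ → ℝ≥0∞) (y, x p) *
      (D v).indicator (1 : ℝ → ℝ≥0∞) y * ∏ c ∈ (G.neighborFinset v).erase p, m c v y := by
    refine (((measurable_one.indicator (hDij v p)).comp measurable_prodMk_right).mul
      (measurable_one.indicator (hD v))).mul (Finset.measurable_fun_prod _ fun c hc => ?_)
    rw [Finset.mem_erase, SimpleGraph.mem_neighborFinset] at hc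
    exact measurable_message hG hD hDij hm hc.2.symm
  calc ∫⁻ y, mpWeight G D Dij m (insert v S) (Function.update x v y)
      = ∫⁻ y, ((mpRegion G D Dij S).indicator 1 x *
          ∏ w ∈ S, ∏ c ∈ G.neighborFinset w \ insert v S, m c w (x w)) *
          ((Dij v p).indicator (1 : ℝ × ℝ → ℝ≥0∞) (y, x p) *
          (D v).indicator (1 : ℝ → ℝ≥0∞) y *
          ∏ c ∈ (G.neighborFinset v).erase p, m c v y) := by
        refine lintegral_congr fun y => ?_
        rw [mpWeight, Finset.prod_insert hv, hind, hrest, hnb, Function.update_self]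
        ring
    _ = mpWeight G D Dij m S x := by
        rw [lintegral_const_mul _ hmeas, ← hm v p hvp, mpWeight,
          prod_messages_insert m hv hp hvp huniq]
        ring

/-- On a tree, integrating the indicator of the model region over the coordinates outside a
connected vertex set `S` yields the weight of `S`. -/
theorem lmarginal_mpModel_eq_mpWeight {V : Type*} [Fintype V] [DecidableEq V]
    {G : SimpleGraph V} [DecidableRel G.Adj] (hG : G.IsTree)
    {D : V → Set ℝ} (hD : ∀ i, MeasurableSet (D i))
    {Dij : V → V → Set (ℝ × ℝ)} (hDij : ∀ i j, MeasurableSet (Dij i j))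
    (hsym : ∀ i j, ∀ p : ℝ × ℝ, p ∈ Dij i j ↔ p.swap ∈ Dij j i)
    {m : V → V → ℝ → ℝ≥0∞}
    (hm : ∀ i j, G.Adj i j → ∀ t : ℝ,
      m i j t = ∫⁻ x : ℝ,
        (Dij i j).indicator (1 : ℝ × ℝ → ℝ≥0∞) (x, t) *
          (D i).indicator (1 : ℝ → ℝ≥0∞) x *
          ∏ c ∈ (G.neighborFinset i).erase j, m c i x)
    (S : Finset V) (hS : (G.induce (S : Set V)).Connected) (x : V → ℝ) :
    lmarginal (fun _ => volume) Sᶜ ((mpModel G D Dij).indicator 1) x =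
      mpWeight G D Dij m S x := by
  induction hn : Sᶜ.card using Nat.strong_induction_on generalizing S x with
  | _ n ih =>
    subst hn
    by_cases huniv : S = Finset.univ
    · subst huniv
      rw [Finset.compl_univ, lmarginal_empty, mpWeight_univ]
    · obtain ⟨b, hb⟩ : ∃ b, b ∉ S := by
        simpa [Finset.eq_univ_iff_forall] using huniv
      obtain ⟨⟨a, ha⟩⟩ := hS.nonempty
      obtain ⟨p, hp, v, hv, hvp⟩ := hG.connected.exists_adj_notMem ha (by simpa using hb)
      have hvS : v ∉ S := by simpa using hv
      have hcompl : (insert v S)ᶜ = Sᶜ.erase v := Finset.compl_insert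
      rw [lmarginal_erase _ (measurable_one.indicator (measurableSet_mpModel G hD hDij))
        (Finset.mem_compl.2 hvS), ← lintegral_mpWeight_insert hG.isAcyclic hD hDij hsym hm hvS hp
          hvp fun q hq hvq => hG.isAcyclic.eq_of_adj_of_induce_connected hS hv hq hp hvq hvp]
      refine lintegral_congr fun y => ?_
      rw [← hcompl]
      refine ih _ ?_ (insert v S) ?_ _ rfl
      · rw [hcompl]
        exact Finset.card_erase_lt_of_mem (Finset.mem_compl.2 hvS)
      · rw [Finset.coe_insert]
        exact SimpleGraph.induce_insert_connected hS hp hvp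

/-- The marginal over all coordinates but `i` as an integral over the subtype `{j // j ≠ i}`. -/
theorem lmarginal_compl_singleton {V : Type*} [Fintype V] [DecidableEq V]
    (f : (V → ℝ) → ℝ≥0∞) (i : V) (x : V → ℝ) :
    lmarginal (fun _ => volume) {i}ᶜ f x =
      ∫⁻ y : {j : V // j ≠ i} → ℝ, f (fun j => if h : j = i then x i else y ⟨j, h⟩) := by
  let e : {j : V // j ≠ i} ≃ ({i}ᶜ : Finset V) := Equiv.subtypeEquivRight (by simp)
  rw [lmarginal, ← (measurePreserving_piCongrLeft (fun _ : ({i}ᶜ : Finset V) =>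
    (volume : Measure ℝ)) e).lintegral_comp_emb (MeasurableEquiv.measurableEmbedding _)]
  refine lintegral_congr fun y => congrArg f (funext fun j => ?_)
  by_cases h : j = i
  · subst h
    simp [Function.updateFinset]
  · have hj : j ∈ ({i}ᶜ : Finset V) := by simpa using h
    simp only [Function.updateFinset, hj, h, dite_true, dite_false]
    exact Equiv.piCongrLeft_apply_apply (fun _ => ℝ) e y ⟨j, h⟩

/-- Proposition 3, MI via message passing: on a tree `G`, with messages `m`
satisfying the message-passing recursion, for every vertex `i` and every `t ∈ ℝ` the
indicator `1[t ∈ D_i]` times the belief `b_i(t) = ∏_{c ∈ N(i)} m_{c→i}(t)` equals the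
partial Lebesgue integral of the indicator of `Δ` over all coordinates except `i`, with
the `i`-th coordinate fixed to `t`; consequently
`volume Δ = ∫ 1[t ∈ D_i] · b_i(t) dt` for every vertex `i`. -/
theorem mi_message_passing {V : Type*} [Fintype V] [DecidableEq V]
    (G : SimpleGraph V) [DecidableRel G.Adj] (hG : G.IsTree)
    (D : V → Set ℝ) (hD : ∀ i, MeasurableSet (D i))
    (Dij : V → V → Set (ℝ × ℝ)) (hDij : ∀ i j, MeasurableSet (Dij i j))
    (hsym : ∀ i j, ∀ p : ℝ × ℝ, p ∈ Dij i j ↔ p.swap ∈ Dij j i)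
    (m : V → V → ℝ → ℝ≥0∞)
    (hm : ∀ i j, G.Adj i j → ∀ t : ℝ,
      m i j t = ∫⁻ x : ℝ,
        (Dij i j).indicator (1 : ℝ × ℝ → ℝ≥0∞) (x, t) *
          (D i).indicator (1 : ℝ → ℝ≥0∞) x *
          ∏ c ∈ (G.neighborFinset i).erase j, m c i x) :
    (∀ i : V, ∀ t : ℝ,
      (D i).indicator (1 : ℝ → ℝ≥0∞) t * ∏ c ∈ G.neighborFinset i, m c i t
        = ∫⁻ y : {j : V // j ≠ i} → ℝ,
            (mpModel G D Dij).indicator (1 : (V → ℝ) → ℝ≥0∞)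
              (fun j => if h : j = i then t else y ⟨j, h⟩)) ∧
    (∀ i : V, volume (mpModel G D Dij)
        = ∫⁻ t : ℝ,
            (D i).indicator (1 : ℝ → ℝ≥0∞) t * ∏ c ∈ G.neighborFinset i, m c i t) := by
  have hmodel := measurableSet_mpModel G hD hDij
  have hmarginal : ∀ (i : V) (x : V → ℝ),
      lmarginal (fun _ => volume) {i}ᶜ ((mpModel G D Dij).indicator 1) x =
        (D i).indicator (1 : ℝ → ℝ≥0∞) (x i) * ∏ c ∈ G.neighborFinset i, m c i (x i) := by
    intro i x
    rw [lmarginal_mpModel_eq_mpWeight hG hD hDij hsym hm {i}, mpWeight_singleton]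
    rw [Finset.coe_singleton, SimpleGraph.induce_singleton_eq_top]
    exact SimpleGraph.connected_top
  refine ⟨fun i t => ?_, fun i => ?_⟩
  · rw [← hmarginal i fun _ => t, lmarginal_compl_singleton]
  · rw [← lintegral_indicator_one hmodel, volume_pi,
      lintegral_eq_lmarginal_univ (fun _ => (0 : ℝ)),
      lmarginal_erase _ (measurable_one.indicator hmodel) (Finset.mem_univ i)]
    refine lintegral_congr fun t => ?_
    rw [← Finset.compl_singleton, hmarginal, Function.update_self]
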